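/- Assume the local setting. Let G(x) be a μ×μ matrix with entries in K_v(x), and define G_n and χ_v as usual. Then χ_v ≥ |[κ_v]_q|_v^{1/κ_v} · |p|_v^{1/(κ_v(p−1))} / max(|G(x)|_{v,Gauss}, 1). -/

import Mathlib

/-!
Both `x ↦ qx` and `d_q` are contractions for the Gauss norm, since `d_q x^n = [n]_q x^{n-1}` and
`|[n]_q| ≤ 1`; the recursion then gives `|G_n| ≤ max(|G|, 1)^n`.

As for the denominators, `[n]_q` is a unit unless `κ ∣ n`, and `[κm]_q = [κ]_q [m]_Q` with
`Q = q^κ`. In the binomial expansion of `[m]_Q` in powers of `Q - 1` the constant term `m` dominates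
as soon as `|Q - 1| < |p|^{1/(p-1)}`, so that `|[m]_Q| = |m|`. Hence
`|[n]_q!| = |[κ]_q|^{⌊n/κ⌋} |⌊n/κ⌋!|`, and Legendre's formula bounds the last factor from below.
-/

open Filter
open scoped ENNReal

noncomputable section

variable {Kv : Type*} [NormedField Kv]

/-- `[n]_q = 1 + q + ⋯ + q^{n-1}`. -/
def qNat (q : Kv) (n : ℕ) : Kv := ∑ i ∈ Finset.range n, q ^ i

/-- `[n]_q! = [1]_q ⋯ [n]_q`. -/
def qFactorial (q : Kv) : ℕ → Kv
  | 0 => 1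
  | n + 1 => qFactorial q n * qNat q (n + 1)

/-- The Gaussian binomial coefficient `binom(n,i)_q`. -/
def qBinom (q : Kv) (n i : ℕ) : Kv := qFactorial q n / (qFactorial q i * qFactorial q (n - i))

/-- The substitution `x ↦ qx` on rational functions. -/
def ratSubst (q : Kv) (f : RatFunc Kv) : RatFunc Kv :=
  algebraMap (Polynomial Kv) (RatFunc Kv) (f.num.comp (Polynomial.C q * Polynomial.X)) /
    algebraMap (Polynomial Kv) (RatFunc Kv) (f.denom.comp (Polynomial.C q * Polynomial.X))

/-- The `q`-difference operator `d_q f(x) = (f(qx) - f(x))/((q-1)x)`. -/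
def qDeriv (q : Kv) (f : RatFunc Kv) : RatFunc Kv :=
  (ratSubst q f - f) / (RatFunc.C (q - 1) * RatFunc.X)

/-- The Gauss norm of a polynomial: the sup of the norms of its coefficients. -/
def polyGaussNorm (P : Polynomial Kv) : ℝ := ⨆ i : ℕ, ‖P.coeff i‖

/-- The Gauss norm of a rational function. -/
def gaussNorm (f : RatFunc Kv) : ℝ := polyGaussNorm f.num / polyGaussNorm f.denom

/-- The Gauss norm of a matrix of rational functions: max of the Gauss norms of the entries. -/
def matGaussNorm {μ : ℕ} (M : Matrix (Fin μ) (Fin μ) (RatFunc Kv)) : ℝ :=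
  ⨆ i, ⨆ j, gaussNorm (M i j)

/-- The sequence of matrices `G_n`: `G_0 = 1`, `G_{n+1}(x) = G(x)·G_n(qx) + (d_q G_n)(x)`. -/
def Gseq {μ : ℕ} (q : Kv) (G : Matrix (Fin μ) (Fin μ) (RatFunc Kv)) :
    ℕ → Matrix (Fin μ) (Fin μ) (RatFunc Kv)
  | 0 => 1
  | n + 1 => G * (Gseq q G n).map (ratSubst q) + (Gseq q G n).map (qDeriv q)

/-- `χ_v = min(1, liminf |G_n/[n]_q!|^{-1/n})`, computed in `ℝ≥0∞`. -/
def chiV {μ : ℕ} (q : Kv) (G : Matrix (Fin μ) (Fin μ) (RatFunc Kv)) : ℝ≥0∞ :=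
  min 1 (Filter.liminf (fun n : ℕ =>
    (ENNReal.ofReal (matGaussNorm (Gseq q G n) / ‖qFactorial q n‖)) ^ (-(1 / (n : ℝ))))
    Filter.atTop)

lemma norm_sub_le_max {E : Type*} [SeminormedAddGroup E] [IsUltrametricDist E] (x y : E) :
    ‖x - y‖ ≤ max ‖x‖ ‖y‖ := by
  simpa [sub_eq_add_neg] using IsUltrametricDist.norm_add_le_max x (-y)

section NatCast

variable {R : Type*} [SeminormedRing R]

/-- The number `|p|^{1/(p-1)}`, which for `R = ℂ_[p]` is the radius of convergence of the
exponential series. -/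
def expRadius (R : Type*) [SeminormedRing R] (p : ℕ) : ℝ := ‖(p : R)‖ ^ ((1 : ℝ) / ((p : ℝ) - 1))

lemma expRadius_nonneg (p : ℕ) : 0 ≤ expRadius R p := Real.rpow_nonneg (norm_nonneg _) _

lemma expRadius_pow_sub_one {p : ℕ} (hp : 1 < p) : expRadius R p ^ (p - 1) = ‖(p : R)‖ := by
  have hp' : (p : ℝ) - 1 ≠ 0 := sub_ne_zero.2 (by exact_mod_cast hp.ne')
  rw [expRadius, ← Real.rpow_natCast, ← Real.rpow_mul (norm_nonneg _), Nat.cast_pred (by lia),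
    one_div_mul_cancel hp', Real.rpow_one]

variable [NormOneClass R] [IsUltrametricDist R]

lemma expRadius_le_one {p : ℕ} (hp : 1 ≤ p) : expRadius R p ≤ 1 :=
  Real.rpow_le_one (norm_nonneg _) (IsUltrametricDist.norm_natCast_le_one R p)
    (one_div_nonneg.2 (sub_nonneg.2 (by exact_mod_cast hp)))

variable [NormMulClass R]

lemma norm_natCast_eq_one_of_coprime {m n : ℕ} (hmn : m.Coprime n) (hm : ‖(m : R)‖ < 1) :
    ‖(n : R)‖ = 1 := by
  obtain ⟨a, b, hab⟩ : IsCoprime (m : ℤ) n := Nat.isCoprime_iff_coprime.2 hmn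
  have bezout : (a * m + b * n : R) = 1 := by exact_mod_cast congrArg (Int.cast : ℤ → R) hab
  refine (IsUltrametricDist.norm_natCast_le_one R n).antisymm (not_lt.1 fun hn => ?_)
  have norm_intCast_mul_lt_one (c : ℤ) {x : R} (hx : ‖x‖ < 1) : ‖(c * x : R)‖ < 1 := by
    rw [norm_mul]
    exact (mul_le_of_le_one_left (norm_nonneg _)
      (IsUltrametricDist.norm_intCast_le_one R c)).trans_lt hx
  have : ‖(1 : R)‖ < 1 := bezout ▸ (IsUltrametricDist.norm_add_le_max _ _).trans_lt
    (max_lt (norm_intCast_mul_lt_one a hm) (norm_intCast_mul_lt_one b hn))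
  exact this.ne norm_one

lemma norm_natCast_eq_norm_pow_padicValNat {p : ℕ} (hp : p.Prime) (hpR : ‖(p : R)‖ < 1)
    {m : ℕ} (hm : m ≠ 0) : ‖(m : R)‖ = ‖(p : R)‖ ^ padicValNat p m := by
  have := Fact.mk hp
  obtain ⟨e, m', hm', rfl⟩ := Nat.exists_eq_pow_mul_and_not_dvd hm p hp.ne_one
  have hm'₀ : m' ≠ 0 := right_ne_zero_of_mul hm
  have hval : padicValNat p (p ^ e * m') = e := by
    rw [padicValNat.mul (pow_ne_zero _ hp.ne_zero) hm'₀, padicValNat.prime_pow,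
      padicValNat.eq_zero_of_not_dvd hm', add_zero]
  rw [hval, Nat.cast_mul, Nat.cast_pow, norm_mul, norm_pow,
    norm_natCast_eq_one_of_coprime (hp.coprime_iff_not_dvd.2 hm') hpR, mul_one]

lemma expRadius_pow_le_norm_factorial {p : ℕ} (hp : p.Prime) (hpR : ‖(p : R)‖ < 1) (m : ℕ) :
    expRadius R p ^ (m - 1) ≤ ‖(m.factorial : R)‖ := by
  have := Fact.mk hp
  rw [norm_natCast_eq_norm_pow_padicValNat hp hpR m.factorial_ne_zero,
    ← expRadius_pow_sub_one hp.one_lt, ← pow_mul]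
  refine pow_le_pow_of_le_one (expRadius_nonneg p) (expRadius_le_one hp.one_le) ?_
  rcases eq_or_ne m 0 with rfl | hm
  · simp
  · exact Nat.le_sub_one_of_lt (sub_one_mul_padicValNat_factorial_lt_of_ne_zero p hm)

lemma norm_choose_mul_norm_le (m k : ℕ) :
    ‖((m.choose (k + 1) : ℕ) : R)‖ * ‖((k + 1 : ℕ) : R)‖ ≤ ‖(m : R)‖ := by
  rcases m with _ | m
  · simp
  · rw [← norm_mul, ← Nat.cast_mul, ← Nat.add_one_mul_choose_eq, Nat.cast_mul, norm_mul]
    exact mul_le_of_le_one_right (norm_nonneg _) (IsUltrametricDist.norm_natCast_le_one R _)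

end NatCast

section QNumbers

lemma one_sub_mul_qNat (q : Kv) (n : ℕ) : (1 - q) * qNat q n = 1 - q ^ n :=
  mul_neg_geom_sum q n

lemma qNat_ne_zero {q : Kv} {n : ℕ} (h : q ^ n ≠ 1) : qNat q n ≠ 0 := fun h₀ =>
  h (sub_eq_zero.1 (by rw [← one_sub_mul_qNat, h₀, mul_zero])).symm

lemma qNat_mul (q : Kv) (k m : ℕ) : qNat q (k * m) = qNat q k * qNat (q ^ k) m := by
  induction m with
  | zero => simp [qNat]
  | succ m ih =>
    have hlast : qNat (q ^ k) (m + 1) = qNat (q ^ k) m + (q ^ k) ^ m := Finset.sum_range_succ _ m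
    calc qNat q (k * (m + 1)) = qNat q (k * m) + q ^ (k * m) * qNat q k := by
          simp only [qNat, Nat.mul_succ, Finset.sum_range_add, pow_add, Finset.mul_sum]
      _ = qNat q k * qNat (q ^ k) (m + 1) := by
          rw [ih, hlast, ← pow_mul]
          ring

lemma qNat_eq_sum_choose_mul_sub_one_pow (q : Kv) (n : ℕ) :
    qNat q n = ∑ k ∈ Finset.range n, ((n.choose (k + 1) : ℕ) : Kv) * (q - 1) ^ k := by
  simpa [Polynomial.eval_comp, Polynomial.eval_finsetSum, qNat] using
    congrArg (Polynomial.eval (q - 1)) (Polynomial.geom_sum_X_comp_X_add_one_eq_sum (R := Kv) n)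

variable [IsUltrametricDist Kv]

lemma norm_qNat_le_one {q : Kv} (hq : ‖q‖ ≤ 1) (n : ℕ) : ‖qNat q n‖ ≤ 1 :=
  IsUltrametricDist.norm_sum_le_of_forall_le_of_nonneg zero_le_one fun i _ => by
    simpa using pow_le_one₀ (norm_nonneg q) hq

lemma norm_one_sub_pow_le_norm_qNat {q : Kv} (hq : ‖q‖ ≤ 1) (n : ℕ) :
    ‖1 - q ^ n‖ ≤ ‖qNat q n‖ := by
  have : ‖1 - q‖ ≤ 1 := (norm_sub_le_max 1 q).trans (by simp [hq])
  rw [← one_sub_mul_qNat, norm_mul]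
  exact mul_le_of_le_one_left (norm_nonneg _) this

lemma norm_qNat_eq_norm_natCast {p : ℕ} (hp : p.Prime) (hpv : ‖(p : Kv)‖ < 1)
    {q : Kv} (hq : ‖1 - q‖ < expRadius Kv p) (m : ℕ) : ‖qNat q m‖ = ‖(m : Kv)‖ := by
  have hr : 0 < expRadius Kv p := (norm_nonneg _).trans_lt hq
  rcases m.eq_zero_or_pos with rfl | hm
  · simp [qNat]
  have norm_factorial_le (k : ℕ) : ‖((k + 1).factorial : Kv)‖ ≤ ‖((k + 1 : ℕ) : Kv)‖ := by
    rw [Nat.factorial_succ, Nat.cast_mul, norm_mul]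
    exact mul_le_of_le_one_right (norm_nonneg _) (IsUltrametricDist.norm_natCast_le_one Kv _)
  have expRadius_pow_le (k : ℕ) : expRadius Kv p ^ k ≤ ‖((k + 1 : ℕ) : Kv)‖ :=
    (expRadius_pow_le_norm_factorial hp hpv (k + 1)).trans (norm_factorial_le k)
  have hm' : 0 < ‖(m : Kv)‖ := by
    simpa [Nat.sub_add_cancel hm] using (pow_pos hr (m - 1)).trans_le (expRadius_pow_le (m - 1))
  have constant_term_dominates (k : ℕ) (hk : k ≠ 0) :
      ‖((m.choose (k + 1) : ℕ) : Kv) * (q - 1) ^ k‖ < ‖(m : Kv)‖ := by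
    have hpow : ‖(q - 1) ^ k‖ < ‖((k + 1 : ℕ) : Kv)‖ := by
      rw [norm_pow, norm_sub_rev]
      exact (pow_lt_pow_left₀ hq (norm_nonneg _) hk).trans_le (expRadius_pow_le k)
    rw [norm_mul]
    rcases (norm_nonneg ((m.choose (k + 1) : ℕ) : Kv)).eq_or_lt with h₀ | h₀
    · rwa [← h₀, zero_mul]
    · exact (mul_lt_mul_of_pos_left hpow h₀).trans_le (norm_choose_mul_norm_le m k)
  rw [qNat_eq_sum_choose_mul_sub_one_pow,
    IsUltrametricDist.isNonarchimedean_norm.apply_sum_eq_of_lt (fun a => (norm_neg a).symm)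
      (Finset.mem_range.2 hm) fun k _ hk => by simpa using constant_term_dominates k hk]
  simp

lemma dvd_of_norm_one_sub_pow_lt_one {q : Kv} (hq : ‖q‖ = 1) {κ : ℕ}
    (hκ : IsLeast {m : ℕ | 0 < m ∧ ‖1 - q ^ m‖ < 1} κ) {n : ℕ} (hn : ‖1 - q ^ n‖ < 1) :
    κ ∣ n := by
  induction n using Nat.strong_induction_on with
  | _ n ih =>
    rcases n.eq_zero_or_pos with rfl | hn₀
    · exact dvd_zero κ
    obtain ⟨b, rfl⟩ := Nat.exists_eq_add_of_le (hκ.2 ⟨hn₀, hn⟩)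
    have hb : ‖1 - q ^ b‖ < 1 := by
      calc ‖1 - q ^ b‖ = ‖(1 - q ^ (κ + b)) - (1 - q ^ κ)‖ := by
            rw [sub_sub_sub_cancel_left, pow_add, ← mul_one_sub, norm_mul, norm_pow, hq, one_pow,
              one_mul]
        _ < 1 := (norm_sub_le_max _ _).trans_lt (max_lt hn hκ.1.2)
    exact (Nat.dvd_add_right dvd_rfl).2 (ih b (Nat.lt_add_of_pos_left hκ.1.1) hb)

lemma norm_qNat_eq_one_of_not_dvd {q : Kv} (hq : ‖q‖ = 1) {κ : ℕ}
    (hκ : IsLeast {m : ℕ | 0 < m ∧ ‖1 - q ^ m‖ < 1} κ) {n : ℕ} (hn : ¬ κ ∣ n) :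
    ‖qNat q n‖ = 1 :=
  (norm_qNat_le_one hq.le n).antisymm <| not_lt.1 fun h =>
    hn (dvd_of_norm_one_sub_pow_lt_one hq hκ ((norm_one_sub_pow_le_norm_qNat hq.le n).trans_lt h))

lemma norm_qFactorial {p : ℕ} (hp : p.Prime) (hpv : ‖(p : Kv)‖ < 1) {q : Kv} (hq : ‖q‖ = 1)
    {κ : ℕ} (hκ : IsLeast {m : ℕ | 0 < m ∧ ‖1 - q ^ m‖ < 1} κ)
    (hκr : ‖1 - q ^ κ‖ < expRadius Kv p) (n : ℕ) :
    ‖qFactorial q n‖ = ‖qNat q κ‖ ^ (n / κ) * ‖((n / κ).factorial : Kv)‖ := by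
  induction n with
  | zero => simp [qFactorial]
  | succ n ih =>
    rw [qFactorial, norm_mul, ih]
    by_cases hd : κ ∣ n + 1
    · have hquot : (n + 1) / κ = n / κ + 1 := by rw [Nat.succ_div, if_pos hd]
      have hlast : ‖qNat q (n + 1)‖ = ‖qNat q κ‖ * ‖((n / κ + 1 : ℕ) : Kv)‖ := by
        rw [← norm_qNat_eq_norm_natCast hp hpv hκr, ← norm_mul, ← qNat_mul, ← hquot,
          Nat.mul_div_cancel' hd]
      rw [hlast, hquot, Nat.factorial_succ, Nat.cast_mul, norm_mul]
      ring
    · rw [norm_qNat_eq_one_of_not_dvd hq hκ hd, mul_one, Nat.succ_div, if_neg hd, add_zero]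

lemma rpow_inv_pow_le_norm_qFactorial {p : ℕ} (hp : p.Prime) (hpv : ‖(p : Kv)‖ < 1)
    {q : Kv} (hq : ‖q‖ = 1) {κ : ℕ} (hκ : IsLeast {m : ℕ | 0 < m ∧ ‖1 - q ^ m‖ < 1} κ)
    (hκr : ‖1 - q ^ κ‖ < expRadius Kv p) (n : ℕ) :
    ((‖qNat q κ‖ * expRadius Kv p) ^ ((1 : ℝ) / κ)) ^ n ≤ ‖qFactorial q n‖ := by
  set b := ‖qNat q κ‖ * expRadius Kv p
  have hr₀ := expRadius_nonneg (R := Kv) p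
  have hr₁ := expRadius_le_one (R := Kv) hp.one_le
  have hb₀ : 0 ≤ b := by positivity
  have hb₁ : b ≤ 1 := mul_le_one₀ (norm_qNat_le_one hq.le κ) hr₀ hr₁
  calc (b ^ ((1 : ℝ) / κ)) ^ n ≤ (b ^ ((1 : ℝ) / κ)) ^ (κ * (n / κ)) :=
        pow_le_pow_of_le_one (by positivity) (Real.rpow_le_one hb₀ hb₁ (by positivity))
          (Nat.mul_div_le n κ)
    _ = ‖qNat q κ‖ ^ (n / κ) * expRadius Kv p ^ (n / κ) := by
        rw [pow_mul, one_div, Real.rpow_inv_natCast_pow hb₀ hκ.1.1.ne', mul_pow]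
    _ ≤ ‖qNat q κ‖ ^ (n / κ) * ‖((n / κ).factorial : Kv)‖ := by
        gcongr
        exact (pow_le_pow_of_le_one hr₀ hr₁ (Nat.sub_le _ _)).trans
          (expRadius_pow_le_norm_factorial hp hpv _)
    _ = ‖qFactorial q n‖ := (norm_qFactorial hp hpv hq hκ hκr n).symm

end QNumbers

section PolyGaussNorm

lemma polyGaussNorm_eq_gaussNorm (P : Polynomial Kv) :
    polyGaussNorm P = P.gaussNorm (NormedField.toAbsoluteValue Kv) 1 := by
  have hle (i : ℕ) : ‖P.coeff i‖ ≤ P.gaussNorm (NormedField.toAbsoluteValue Kv) 1 := by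
    have h := P.le_gaussNorm (NormedField.toAbsoluteValue Kv) (c := 1) zero_le_one i
    rwa [one_pow, mul_one] at h
  refine (ciSup_le hle).antisymm ?_
  obtain ⟨i, hi⟩ := P.exists_eq_gaussNorm (NormedField.toAbsoluteValue Kv) 1
  rw [hi, one_pow, mul_one]
  exact le_ciSup (f := fun i => ‖P.coeff i‖) ⟨_, Set.forall_mem_range.2 hle⟩ i

lemma norm_coeff_le_polyGaussNorm (P : Polynomial Kv) (i : ℕ) : ‖P.coeff i‖ ≤ polyGaussNorm P := by
  rw [polyGaussNorm_eq_gaussNorm]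
  have h := P.le_gaussNorm (NormedField.toAbsoluteValue Kv) (c := 1) zero_le_one i
  rwa [one_pow, mul_one] at h

lemma polyGaussNorm_nonneg (P : Polynomial Kv) : 0 ≤ polyGaussNorm P :=
  Real.iSup_nonneg fun _ => norm_nonneg _

lemma polyGaussNorm_pos {P : Polynomial Kv} (hP : P ≠ 0) : 0 < polyGaussNorm P :=
  (norm_pos_iff.2 (Polynomial.leadingCoeff_ne_zero.2 hP)).trans_le (norm_coeff_le_polyGaussNorm P _)

lemma polyGaussNorm_C (a : Kv) : polyGaussNorm (Polynomial.C a) = ‖a‖ := by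
  rw [polyGaussNorm_eq_gaussNorm, Polynomial.gaussNorm_C]
  rfl

lemma polyGaussNorm_comp_C_mul_X {q : Kv} (hq : ‖q‖ = 1) (P : Polynomial Kv) :
    polyGaussNorm (P.comp (Polynomial.C q * Polynomial.X)) = polyGaussNorm P := by
  simp [polyGaussNorm, hq]

variable [IsUltrametricDist Kv]

lemma polyGaussNorm_mul (P Q : Polynomial Kv) :
    polyGaussNorm (P * Q) = polyGaussNorm P * polyGaussNorm Q := by
  simp only [polyGaussNorm_eq_gaussNorm]
  exact Polynomial.gaussNorm_mul IsUltrametricDist.isNonarchimedean_norm one_pos P Q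

lemma polyGaussNorm_add_le_max (P Q : Polynomial Kv) :
    polyGaussNorm (P + Q) ≤ max (polyGaussNorm P) (polyGaussNorm Q) := by
  simp only [polyGaussNorm_eq_gaussNorm]
  exact Polynomial.isNonarchimedean_gaussNorm _ IsUltrametricDist.isNonarchimedean_norm
    zero_le_one P Q

end PolyGaussNorm

section GaussNorm

lemma gaussNorm_nonneg (f : RatFunc Kv) : 0 ≤ gaussNorm f :=
  div_nonneg (polyGaussNorm_nonneg _) (polyGaussNorm_nonneg _)

lemma gaussNorm_algebraMap (P : Polynomial Kv) :
    gaussNorm (algebraMap (Polynomial Kv) (RatFunc Kv) P) = polyGaussNorm P := by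
  rw [gaussNorm, RatFunc.num_algebraMap, RatFunc.denom_algebraMap, ← Polynomial.C_1,
    polyGaussNorm_C, norm_one, div_one]

lemma gaussNorm_C (a : Kv) : gaussNorm (RatFunc.C a) = ‖a‖ := by
  rw [← RatFunc.algebraMap_C, gaussNorm_algebraMap, polyGaussNorm_C]

variable [IsUltrametricDist Kv]

lemma gaussNorm_algebraMap_div (P Q : Polynomial Kv) :
    gaussNorm (algebraMap (Polynomial Kv) (RatFunc Kv) P / algebraMap _ _ Q) =
      polyGaussNorm P / polyGaussNorm Q := by
  rcases eq_or_ne Q 0 with rfl | hQ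
  · simp [gaussNorm, polyGaussNorm]
  have h := congrArg polyGaussNorm ((RatFunc.num_mul_eq_mul_denom_iff hQ).2
    (rfl : algebraMap (Polynomial Kv) (RatFunc Kv) P / algebraMap _ _ Q = _))
  rw [polyGaussNorm_mul, polyGaussNorm_mul] at h
  rwa [gaussNorm, div_eq_div_iff (polyGaussNorm_pos (RatFunc.denom_ne_zero _)).ne'
    (polyGaussNorm_pos hQ).ne']

lemma gaussNorm_mul (f g : RatFunc Kv) : gaussNorm (f * g) = gaussNorm f * gaussNorm g := by
  conv_lhs => rw [← f.num_div_denom, ← g.num_div_denom, div_mul_div_comm, ← map_mul, ← map_mul]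
  rw [gaussNorm_algebraMap_div, polyGaussNorm_mul, polyGaussNorm_mul, gaussNorm, gaussNorm,
    div_mul_div_comm]

lemma gaussNorm_neg (f : RatFunc Kv) : gaussNorm (-f) = gaussNorm f := by
  rw [← neg_one_mul, gaussNorm_mul, ← map_one RatFunc.C, ← map_neg, gaussNorm_C, norm_neg, norm_one,
    one_mul]

lemma isNonarchimedean_gaussNorm : IsNonarchimedean (gaussNorm : RatFunc Kv → ℝ) := by
  intro f g
  obtain ⟨P, Q, D, rfl, rfl⟩ : ∃ P Q D : Polynomial Kv,
      f = algebraMap _ _ P / algebraMap _ _ D ∧ g = algebraMap _ _ Q / algebraMap _ _ D := by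
    have hf := RatFunc.algebraMap_ne_zero f.denom_ne_zero
    have hg := RatFunc.algebraMap_ne_zero g.denom_ne_zero
    refine ⟨f.num * g.denom, f.denom * g.num, f.denom * g.denom, ?_, ?_⟩
    · rw [map_mul, map_mul, mul_div_mul_right _ _ hg, f.num_div_denom]
    · rw [map_mul, map_mul, mul_div_mul_left _ _ hf, g.num_div_denom]
  rw [← add_div, ← map_add, gaussNorm_algebraMap_div, gaussNorm_algebraMap_div,
    gaussNorm_algebraMap_div, max_div_div_right (polyGaussNorm_nonneg D)]
  exact div_le_div_of_nonneg_right (polyGaussNorm_add_le_max P Q) (polyGaussNorm_nonneg D)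

lemma gaussNorm_sub_le_max (f g : RatFunc Kv) :
    gaussNorm (f - g) ≤ max (gaussNorm f) (gaussNorm g) := by
  simpa [sub_eq_add_neg, gaussNorm_neg] using isNonarchimedean_gaussNorm f (-g)

end GaussNorm

section QDeriv

open Polynomial (C X)

/-- The `q`-derivative on polynomials, sending `∑ a_n x^n` to `∑ [n]_q a_n x^{n-1}`. -/
def polyQDeriv (q : Kv) (P : Polynomial Kv) : Polynomial Kv :=
  ∑ n ∈ Finset.range P.natDegree, Polynomial.monomial n (qNat q (n + 1) * P.coeff (n + 1))

lemma coeff_polyQDeriv (q : Kv) (P : Polynomial Kv) (n : ℕ) :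
    (polyQDeriv q P).coeff n = qNat q (n + 1) * P.coeff (n + 1) := by
  simp only [polyQDeriv, Polynomial.finsetSum_coeff, Polynomial.coeff_monomial,
    Finset.sum_ite_eq', Finset.mem_range, ite_eq_left_iff, not_lt]
  intro hn
  rw [Polynomial.coeff_eq_zero_of_natDegree_lt (Nat.lt_succ_of_le hn), mul_zero]

lemma comp_C_mul_X_sub_self (q : Kv) (P : Polynomial Kv) :
    P.comp (C q * X) - P = polyQDeriv q P * (C (q - 1) * X) := by
  ext n
  rcases n with _ | n
  · simp
  · rw [← mul_assoc, Polynomial.coeff_mul_X, Polynomial.coeff_mul_C, coeff_polyQDeriv,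
      Polynomial.coeff_sub, Polynomial.comp_C_mul_X_coeff]
    linear_combination P.coeff (n + 1) * one_sub_mul_qNat q (n + 1)

lemma qDeriv_algebraMap {q : Kv} (hq : q ≠ 1) (P : Polynomial Kv) :
    qDeriv q (algebraMap _ _ P) = algebraMap _ _ (polyQDeriv q P) := by
  have hX : (C (q - 1) * X : Polynomial Kv) ≠ 0 :=
    mul_ne_zero (Polynomial.C_ne_zero.2 (sub_ne_zero.2 hq)) Polynomial.X_ne_zero
  have hsubst : ratSubst q (algebraMap _ _ P) = algebraMap _ _ (P.comp (C q * X)) := by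
    simp [ratSubst]
  rw [qDeriv, hsubst, ← map_sub, comp_C_mul_X_sub_self, ← RatFunc.algebraMap_C,
    ← RatFunc.algebraMap_X, ← map_mul, map_mul, mul_div_cancel_right₀]
  exact RatFunc.algebraMap_ne_zero hX

lemma ratSubst_mul {q : Kv} (hq : q ≠ 0) (f g : RatFunc Kv) :
    ratSubst q (f * g) = ratSubst q f * ratSubst q g := by
  let φ := Polynomial.compRingHom (C q * X)
  have hφ : nonZeroDivisors (Polynomial Kv) ≤ (nonZeroDivisors (Polynomial Kv)).comap φ := by
    intro P hP
    rw [Submonoid.mem_comap, mem_nonZeroDivisors_iff_ne_zero]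
    exact mt (Polynomial.comp_C_mul_X_eq_zero_iff (mem_nonZeroDivisors_of_ne_zero hq)).1
      (nonZeroDivisors.ne_zero hP)
  have hsubst (f : RatFunc Kv) : ratSubst q f = RatFunc.map φ hφ f :=
    (RatFunc.map_apply φ hφ f).symm
  simp only [hsubst, map_mul]

lemma qDeriv_mul {q : Kv} (hq : q ≠ 0) (f g : RatFunc Kv) :
    qDeriv q (f * g) = ratSubst q f * qDeriv q g + qDeriv q f * g := by
  simp only [qDeriv, ratSubst_mul hq]
  ring

variable [IsUltrametricDist Kv]

lemma polyGaussNorm_polyQDeriv_le {q : Kv} (hq : ‖q‖ ≤ 1) (P : Polynomial Kv) :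
    polyGaussNorm (polyQDeriv q P) ≤ polyGaussNorm P := by
  refine ciSup_le fun n => ?_
  rw [coeff_polyQDeriv, norm_mul]
  exact (mul_le_of_le_one_left (norm_nonneg _) (norm_qNat_le_one hq _)).trans
    (norm_coeff_le_polyGaussNorm P _)

lemma gaussNorm_ratSubst {q : Kv} (hq : ‖q‖ = 1) (f : RatFunc Kv) :
    gaussNorm (ratSubst q f) = gaussNorm f := by
  rw [ratSubst, gaussNorm_algebraMap_div, polyGaussNorm_comp_C_mul_X hq,
    polyGaussNorm_comp_C_mul_X hq, gaussNorm]

-- The Leibniz rule for `f * f.denom = f.num` reduces the bound to the case of polynomials.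
lemma gaussNorm_qDeriv_le {q : Kv} (hq : ‖q‖ = 1) (hq₁ : q ≠ 1) (f : RatFunc Kv) :
    gaussNorm (qDeriv q f) ≤ gaussNorm f := by
  have hq₀ : q ≠ 0 := norm_ne_zero_iff.1 (by simp [hq])
  set P := algebraMap (Polynomial Kv) (RatFunc Kv) f.num
  set Q := algebraMap (Polynomial Kv) (RatFunc Kv) f.denom
  have hQ : 0 < gaussNorm Q := by
    rw [gaussNorm_algebraMap]
    exact polyGaussNorm_pos f.denom_ne_zero
  have hfQ : f * Q = P :=
    (div_eq_iff (RatFunc.algebraMap_ne_zero f.denom_ne_zero)).1 f.num_div_denom |>.symm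
  have hpoly (R : Polynomial Kv) :
      gaussNorm (qDeriv q (algebraMap (Polynomial Kv) (RatFunc Kv) R)) ≤
        gaussNorm (algebraMap (Polynomial Kv) (RatFunc Kv) R) := by
    rw [qDeriv_algebraMap hq₁, gaussNorm_algebraMap, gaussNorm_algebraMap]
    exact polyGaussNorm_polyQDeriv_le hq.le R
  refine le_of_mul_le_mul_right ?_ hQ
  calc gaussNorm (qDeriv q f) * gaussNorm Q
      = gaussNorm (qDeriv q P - ratSubst q f * qDeriv q Q) := by
        rw [← gaussNorm_mul, ← hfQ, qDeriv_mul hq₀, add_sub_cancel_left]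
    _ ≤ max (gaussNorm P) (gaussNorm f * gaussNorm Q) := by
        grw [gaussNorm_sub_le_max, gaussNorm_mul, gaussNorm_ratSubst hq, hpoly, hpoly]
        exact gaussNorm_nonneg f
    _ = gaussNorm f * gaussNorm Q := by rw [← hfQ, gaussNorm_mul, max_self]

end QDeriv

section MatGaussNorm

variable {μ : ℕ}

lemma matGaussNorm_le {M : Matrix (Fin μ) (Fin μ) (RatFunc Kv)} {B : ℝ} (hB : 0 ≤ B)
    (h : ∀ i j, gaussNorm (M i j) ≤ B) : matGaussNorm M ≤ B :=
  Real.iSup_le (fun i => Real.iSup_le (h i) hB) hB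

lemma gaussNorm_le_matGaussNorm (M : Matrix (Fin μ) (Fin μ) (RatFunc Kv)) (i j : Fin μ) :
    gaussNorm (M i j) ≤ matGaussNorm M :=
  (Finite.le_ciSup (fun j => gaussNorm (M i j)) j).trans
    (Finite.le_ciSup (fun i => ⨆ j, gaussNorm (M i j)) i)

lemma matGaussNorm_nonneg (M : Matrix (Fin μ) (Fin μ) (RatFunc Kv)) : 0 ≤ matGaussNorm M :=
  Real.iSup_nonneg fun _ => Real.iSup_nonneg fun _ => gaussNorm_nonneg _

lemma matGaussNorm_map_le {φ : RatFunc Kv → RatFunc Kv} (hφ : ∀ f, gaussNorm (φ f) ≤ gaussNorm f)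
    (M : Matrix (Fin μ) (Fin μ) (RatFunc Kv)) : matGaussNorm (M.map φ) ≤ matGaussNorm M :=
  matGaussNorm_le (matGaussNorm_nonneg M) fun i j =>
    (hφ _).trans (gaussNorm_le_matGaussNorm M i j)

lemma matGaussNorm_one_le : matGaussNorm (1 : Matrix (Fin μ) (Fin μ) (RatFunc Kv)) ≤ 1 := by
  refine matGaussNorm_le zero_le_one fun i j => ?_
  rw [Matrix.one_apply]
  split_ifs
  · rw [← map_one RatFunc.C, gaussNorm_C, norm_one]
  · rw [← map_zero RatFunc.C, gaussNorm_C, norm_zero]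
    exact zero_le_one

variable [IsUltrametricDist Kv]

lemma matGaussNorm_add_le_max (M N : Matrix (Fin μ) (Fin μ) (RatFunc Kv)) :
    matGaussNorm (M + N) ≤ max (matGaussNorm M) (matGaussNorm N) :=
  matGaussNorm_le (le_max_of_le_left (matGaussNorm_nonneg M)) fun i j =>
    (isNonarchimedean_gaussNorm _ _).trans
      (max_le_max (gaussNorm_le_matGaussNorm M i j) (gaussNorm_le_matGaussNorm N i j))

lemma matGaussNorm_mul_le (M N : Matrix (Fin μ) (Fin μ) (RatFunc Kv)) :
    matGaussNorm (M * N) ≤ matGaussNorm M * matGaussNorm N := by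
  refine matGaussNorm_le (mul_nonneg (matGaussNorm_nonneg M) (matGaussNorm_nonneg N)) fun i j => ?_
  obtain ⟨k, -, hk⟩ := isNonarchimedean_gaussNorm.finset_image_add_of_nonempty
    (fun k => M i k * N k j) ⟨i, Finset.mem_univ i⟩
  rw [Matrix.mul_apply]
  refine hk.trans ?_
  rw [gaussNorm_mul]
  exact mul_le_mul (gaussNorm_le_matGaussNorm M i k) (gaussNorm_le_matGaussNorm N k j)
    (gaussNorm_nonneg _) (matGaussNorm_nonneg M)

lemma matGaussNorm_Gseq_le {q : Kv} (hq : ‖q‖ = 1) (hq₁ : q ≠ 1)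
    (G : Matrix (Fin μ) (Fin μ) (RatFunc Kv)) (n : ℕ) :
    matGaussNorm (Gseq q G n) ≤ max (matGaussNorm G) 1 ^ n := by
  set M := max (matGaussNorm G) 1
  have hM : 1 ≤ M := le_max_right _ _
  induction n with
  | zero => simpa [Gseq] using matGaussNorm_one_le
  | succ n ih =>
    have hsubst : matGaussNorm (G * (Gseq q G n).map (ratSubst q)) ≤ M ^ (n + 1) := by
      rw [pow_succ']
      exact (matGaussNorm_mul_le _ _).trans (mul_le_mul (le_max_left _ _)
        ((matGaussNorm_map_le (fun f => (gaussNorm_ratSubst hq f).le) _).trans ih)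
        (matGaussNorm_nonneg _) (zero_le_one.trans hM))
    have hderiv : matGaussNorm ((Gseq q G n).map (qDeriv q)) ≤ M ^ (n + 1) :=
      (matGaussNorm_map_le (gaussNorm_qDeriv_le hq hq₁) _).trans
        (ih.trans (pow_le_pow_right₀ hM n.le_succ))
    exact (matGaussNorm_add_le_max _ _).trans (max_le hsubst hderiv)

end MatGaussNorm

lemma ofReal_inv_le_liminf_rpow_neg_one_div {a : ℕ → ℝ} {B : ℝ} (hB : 0 < B)
    (ha : ∀ᶠ n in atTop, a n ≤ B ^ n) :
    ENNReal.ofReal B⁻¹ ≤ liminf (fun n : ℕ => ENNReal.ofReal (a n) ^ (-(1 / (n : ℝ)))) atTop := by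
  refine le_liminf_of_le (by isBoundedDefault) ?_
  filter_upwards [ha, eventually_ne_atTop 0] with n han hn
  rw [ENNReal.rpow_neg, ENNReal.ofReal_inv_of_pos hB, ENNReal.inv_le_inv]
  calc ENNReal.ofReal (a n) ^ (1 / (n : ℝ)) ≤ ENNReal.ofReal (B ^ n) ^ (1 / (n : ℝ)) := by gcongr
    _ = ENNReal.ofReal B := by
      rw [ENNReal.ofReal_rpow_of_nonneg (by positivity) (by positivity), one_div,
        Real.pow_rpow_inv_natCast hB.le hn]

theorem q_difference_first_chi_estimate_general [IsUltrametricDist Kv]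
    {p : ℕ} (hp : p.Prime) (hpv : ‖(p : Kv)‖ < 1) {q : Kv} (hq : ‖q‖ = 1)
    {κ : ℕ} (hκ : IsLeast {m : ℕ | 0 < m ∧ ‖1 - q ^ m‖ < 1} κ) (hqκ : q ^ κ ≠ 1)
    (hdw : ‖1 - q ^ κ‖ < ‖(p : Kv)‖ ^ ((1 : ℝ) / ((p : ℝ) - 1)))
    {μ : ℕ} (G : Matrix (Fin μ) (Fin μ) (RatFunc Kv)) :
    ENNReal.ofReal
        ((‖qNat q κ‖ ^ ((1 : ℝ) / (κ : ℝ)) * ‖(p : Kv)‖ ^ ((1 : ℝ) / ((κ : ℝ) * ((p : ℝ) - 1)))) /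
          max (matGaussNorm G) 1) ≤
      chiV q G := by
  have hq₁ : q ≠ 1 := by
    rintro rfl
    exact hqκ (one_pow κ)
  have hr : 0 < expRadius Kv p := (norm_nonneg _).trans_lt hdw
  have hκq : 0 < ‖qNat q κ‖ := norm_pos_iff.2 (qNat_ne_zero hqκ)
  set c := (‖qNat q κ‖ * expRadius Kv p) ^ ((1 : ℝ) / κ) with hc
  set M := max (matGaussNorm G) 1
  have hc_eq : ‖qNat q κ‖ ^ ((1 : ℝ) / κ) * ‖(p : Kv)‖ ^ ((1 : ℝ) / (κ * ((p : ℝ) - 1))) = c := by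
    rw [hc, Real.mul_rpow hκq.le hr.le, expRadius, ← Real.rpow_mul (norm_nonneg _),
      one_div_mul_one_div_rev]
  have hc₀ : 0 < c := by positivity
  have hc₁ : c ≤ 1 := Real.rpow_le_one (by positivity)
    (mul_le_one₀ (norm_qNat_le_one hq.le κ) hr.le (expRadius_le_one hp.one_le)) (by positivity)
  have hM : 1 ≤ M := le_max_right _ _
  have hG (n : ℕ) : matGaussNorm (Gseq q G n) / ‖qFactorial q n‖ ≤ (M / c) ^ n := by
    rw [div_pow]
    exact div_le_div₀ (by positivity) (matGaussNorm_Gseq_le hq hq₁ G n) (by positivity)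
      (rpow_inv_pow_le_norm_qFactorial hp hpv hq hκ hdw n)
  rw [hc_eq, ← inv_div]
  refine le_min ?_ (ofReal_inv_le_liminf_rpow_neg_one_div (by positivity) (.of_forall hG))
  exact ENNReal.ofReal_le_one.2 (inv_le_one_of_one_le₀ ((one_le_div hc₀).2 (hc₁.trans hM)))

theorem q_difference_first_chi_estimate
    {Kv : Type*} [NontriviallyNormedField Kv] [CompleteSpace Kv]
    (hna : ∀ x y : Kv, ‖x + y‖ ≤ max ‖x‖ ‖y‖)
    (p : ℕ) (hp : Nat.Prime p) (hpv : ‖(p : Kv)‖ < 1)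
    (q : Kv) (hq1 : ‖q‖ = 1) (hqru : ∀ m : ℕ, 0 < m → q ^ m ≠ 1)
    (κ : ℕ) (hκpos : 0 < κ) (hκlt : ‖1 - q ^ κ‖ < 1)
    (hκmin : ∀ m : ℕ, 0 < m → ‖1 - q ^ m‖ < 1 → κ ≤ m)
    (hdw : ‖1 - q ^ κ‖ < ‖(p : Kv)‖ ^ ((1 : ℝ) / ((p : ℝ) - 1)))
    (μ : ℕ) (G : Matrix (Fin μ) (Fin μ) (RatFunc Kv)) :
    ENNReal.ofReal
        ((‖qNat q κ‖ ^ ((1 : ℝ) / (κ : ℝ)) * ‖(p : Kv)‖ ^ ((1 : ℝ) / ((κ : ℝ) * ((p : ℝ) - 1)))) /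
          max (matGaussNorm G) 1) ≤
      chiV q G := by
  have := IsUltrametricDist.isUltrametricDist_of_forall_norm_add_le_max_norm hna
  exact q_difference_first_chi_estimate_general hp hpv hq1
    ⟨⟨hκpos, hκlt⟩, fun m hm => hκmin m hm.1 hm.2⟩ (hqru κ hκpos) hdw G
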